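/- Let q ≥ 3 be an integer, let G be a graph in A(q) with maximum degree t ≥ q+2, and let f and g be two proper t-edge-colorings of G. Suppose that the subgraph G(f,g,t) contains a t-alternating cycle C such that either the edges of C are colored (under f) with at most q+1 colors, or some vertex of C has degree less than t in G. Then there is a proper t-edge-coloring f̄ of G such that f̄ is (q+1)-equivalent to f and |M(f̄,t) ∩ M(g,t)| > |M(f,t) ∩ M(g,t)|. -/

import Mathlib

/-!
Write `M = M(f,t)` and `M' = M(g,t)`. Since `M` and `M'` are matchings, the cycle `C` alternates
between `M \ M'` and `M' \ M`. The class `𝒜(q)` enters through one principle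
(`exists_recoloring`): any set of edges with at most `q` edges at each vertex can be properly
recolored with any `q` prescribed colors.

If `f` uses at most `q + 1` colors on `C`, take `q + 1` colors containing these and let `H` be the
graph formed by their classes. Every vertex of degree `q + 1` in `H` is covered by `M`, hence by
`M △ C`, so `H - (M △ C)` has maximum degree at most `q` and can be recolored with the `q` colors
other than `t`, while `M △ C` becomes the class `t` (`exists_better_of_few_colors`).

Suppose now that a vertex `a` of `C` has degree less than `t`. Going along `C` from `a`, starting
with its `M`-edge, one passes through almost proper colorings `φ` (`Near`): the set of edges of
color `t` is a matching, except that at one vertex `x` the edge `xy` of color `t` may meet another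
one, while some color `β ≠ t` is missing at `x`. The first one is `f` itself with `x = a`.

* One step (`Near.step`): let `yz` be the `M'`-edge at `y` and take a `q`-set `R` of colors `≠ t`
  containing `β` and the color of `yz`. The edges with colors in `R`, without `yz` but with `xy`,
  have at most `q` edges at each vertex: at `x` because `β` is missing, at `y` because `yz` is left
  out. Recolor them with `R` and give `yz` color `t`. If `z` was incident with an edge `zw` of color
  `t`, the result is almost proper with `zw` in place of `xy`, since the removal of `yz` leaves a
  color of `R` missing at `z`; otherwise it is proper. In both cases `M'` gains the edge `yz` in the
  class `t` and loses none there, so the process ends.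
* An almost proper coloring has proper completions (`Near.exists_completion`): recolor any `q`
  classes among which are `t` and `β`. The step from `φ` to the next almost proper coloring `ψ`
  changes only the `q + 1` classes `R ∪ {t}`; taking `R ∪ {t}` to contain the colors changed in the
  completion of `φ`, and completing `ψ` inside `R ∪ {t}`, consecutive completions differ by at
  most `q + 1` classes.

The second part does not need the orbit to close up along `C`: only the closure of the vertex set
of `C` under passing to `M`- and `M'`-neighbors is used.
-/

open SimpleGraph Set

namespace EdgeTrans

universe u v

variable {V : Type*} {W : Type*}

/-- The degree of a vertex. -/
noncomputable def deg (G : SimpleGraph V) (x : V) : ℕ :=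
  (G.neighborSet x).ncard

/-- The maximum degree `Δ(G)`. -/
noncomputable def maxDeg (G : SimpleGraph V) : ℕ :=
  ⨆ x, deg G x

/-- A proper `t`-edge-coloring of `G`, using the colors `1, …, t`. -/
def IsProperEdgeColoring (G : SimpleGraph V) (t : ℕ) (f : Sym2 V → ℕ) : Prop :=
  (∀ e ∈ G.edgeSet, f e ∈ Finset.Icc 1 t) ∧
  ∀ e₁ ∈ G.edgeSet, ∀ e₂ ∈ G.edgeSet, e₁ ≠ e₂ → (∃ x, x ∈ e₁ ∧ x ∈ e₂) → f e₁ ≠ f e₂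

/-- The color class `M(f, j)`: the set of edges of `G` colored `j` by `f`. -/
def colorClass (G : SimpleGraph V) (f : Sym2 V → ℕ) (j : ℕ) : Set (Sym2 V) :=
  {e | e ∈ G.edgeSet ∧ f e = j}

/-- `f` and `g` differ by at most `n` color classes. -/
def DifferAtMost (G : SimpleGraph V) (n : ℕ) (f g : Sym2 V → ℕ) : Prop :=
  {j : ℕ | colorClass G f j ≠ colorClass G g j}.ncard ≤ n

/-- `f` and `g` are `n`-equivalent proper `t`-edge-colorings: one can be transformed into the
other by a sequence of proper `t`-edge-colorings in which consecutive colorings differ by at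
most `n` color classes. -/
def NEquiv (G : SimpleGraph V) (t n : ℕ) (f g : Sym2 V → ℕ) : Prop :=
  ∃ (k : ℕ) (F : ℕ → Sym2 V → ℕ), 1 ≤ k ∧ F 0 = f ∧ F k = g ∧
    (∀ i ≤ k, IsProperEdgeColoring G t (F i)) ∧
    ∀ i < k, DifferAtMost G n (F i) (F (i + 1))

/-- The chromatic index `χ'(G)`. -/
noncomputable def chromIdx (G : SimpleGraph V) : ℕ :=
  sInf {t | ∃ f, IsProperEdgeColoring G t f}

/-- The edge chromatic transformation index `χ'_trans(G)`: the minimum `n ≥ 2` such that any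
two proper `χ'(G)`-edge-colorings of `G` are `n`-equivalent. -/
noncomputable def transIdx (G : SimpleGraph V) : ℕ :=
  sInf {n | 2 ≤ n ∧ ∀ f g, IsProperEdgeColoring G (chromIdx G) f →
      IsProperEdgeColoring G (chromIdx G) g → NEquiv G (chromIdx G) n f g}

/-- `v` is a cutvertex of `G`: some two other vertices are connected in `G`, but every walk
between them passes through `v`. -/
def IsCutVertex (G : SimpleGraph V) (x : V) : Prop :=
  ∃ a b : V, a ≠ x ∧ b ≠ x ∧ G.Reachable a b ∧ ∀ p : G.Walk a b, x ∈ p.support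

/-- A block of `G`: a maximal connected subgraph without a cutvertex of the subgraph. -/
def IsBlock (G : SimpleGraph V) (B : G.Subgraph) : Prop :=
  B.coe.Connected ∧ (∀ x, ¬ IsCutVertex B.coe x) ∧
    ∀ B' : G.Subgraph, B ≤ B' → B'.coe.Connected →
      (∀ x, ¬ IsCutVertex B'.coe x) → B' = B

/-- Membership in the class `𝒜(q)`: every subgraph `H` of `G` with `Δ(H) ≤ q` has a proper
`q`-edge-coloring. -/
def MemA (q : ℕ) (G : SimpleGraph V) : Prop :=
  ∀ H : SimpleGraph V, H ≤ G → maxDeg H ≤ q → ∃ f, IsProperEdgeColoring H q f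

/-- `G` is `k`-degenerate: every (nonempty) subgraph of `G` contains a vertex of degree
at most `k` in the subgraph. -/
def Degenerate (k : ℕ) (G : SimpleGraph V) : Prop :=
  ∀ H : G.Subgraph, H.verts.Nonempty → ∃ x ∈ H.verts, (H.neighborSet x).ncard ≤ k

/-- `G` has `H` as a minor (via branch sets). -/
def HasMinor (G : SimpleGraph V) (H : SimpleGraph W) : Prop :=
  ∃ F : W → Set V,
    (∀ w, (G.induce (F w)).Connected) ∧
    (∀ w₁ w₂, w₁ ≠ w₂ → Disjoint (F w₁) (F w₂)) ∧
    (∀ w₁ w₂, H.Adj w₁ w₂ → ∃ v₁ ∈ F w₁, ∃ v₂ ∈ F w₂, G.Adj v₁ v₂)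

/-- Planarity, via Wagner's characterization: no `K₅` minor and no `K₃,₃` minor. -/
def Planar (G : SimpleGraph V) : Prop :=
  ¬ HasMinor G (completeGraph (Fin 5)) ∧
  ¬ HasMinor G (completeBipartiteGraph (Fin 3) (Fin 3))

/-- Series-parallel: no `K₄` minor. -/
def SeriesParallel (G : SimpleGraph V) : Prop :=
  ¬ HasMinor G (completeGraph (Fin 4))

/-- `G` is chordless: in every cycle, any two nonconsecutive vertices are non-adjacent,
i.e. every edge of `G` joining two vertices of a cycle is an edge of the cycle. -/
def Chordless (G : SimpleGraph V) : Prop :=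
  ∀ (x : V) (c : G.Walk x x), c.IsCycle →
    ∀ a ∈ c.support, ∀ b ∈ c.support, G.Adj a b → s(a, b) ∈ c.edges

/-- The wheel graph with hub `none` and cycle `ZMod n`. -/
def wheelGraph (n : ℕ) : SimpleGraph (Option (ZMod n)) :=
  SimpleGraph.fromRel (fun a b =>
    a = none ∨ ∃ i : ZMod n, a = some i ∧ b = some (i + 1))

/-- `G` is a wheel graph. -/
def IsWheel (G : SimpleGraph V) : Prop :=
  ∃ n : ℕ, 3 ≤ n ∧ Nonempty (G ≃g wheelGraph n)

/-- `G` is a Halin graph: `G` is planar and is the edge-disjoint union of a spanning tree `T`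
on at least four vertices having no vertex of degree two, and a cycle through exactly the
leaves of `T`. -/
def IsHalin (G : SimpleGraph V) : Prop :=
  Planar G ∧ 4 ≤ Nat.card V ∧
  ∃ T : SimpleGraph V, T ≤ G ∧ T.IsTree ∧ (∀ x : V, deg T x ≠ 2) ∧
    ∃ (x₀ : V) (c : G.Walk x₀ x₀), c.IsCycle ∧
      (∀ e : Sym2 V, e ∈ c.edges ↔ e ∈ G.edgeSet \ T.edgeSet) ∧
      (∀ u : V, u ∈ c.support ↔ deg T u = 1)

/-- The subgraph `G(f,g,t)`: the (spanning) subgraph of `G` with edge set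
`M(f,t) △ M(g,t)`. -/
def diffGraph (G : SimpleGraph V) (t : ℕ) (f g : Sym2 V → ℕ) : SimpleGraph V :=
  SimpleGraph.fromEdgeSet (symmDiff (colorClass G f t) (colorClass G g t))

/-- The walk `p` (a path or a cycle) is an entire connected component of its ambient graph:
every edge incident with a vertex of `p` is an edge of `p`. -/
def IsComponentWalk {G : SimpleGraph V} {u x : V} (p : G.Walk u x) : Prop :=
  ∀ a ∈ p.support, ∀ b, G.Adj a b → s(a, b) ∈ p.edges

/-- The color `i` is missing at `x` under `f`. -/
def MissingAt (G : SimpleGraph V) (f : Sym2 V → ℕ) (i : ℕ) (x : V) : Prop :=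
  ∀ e ∈ G.edgeSet, x ∈ e → f e ≠ i

/-- The path `p` is alternately colored with colors `a` and `b` under `f`
(an `(a,b)`-colored path). -/
def AltColored (f : Sym2 V → ℕ) (a b : ℕ) {G : SimpleGraph V} {u x : V}
    (p : G.Walk u x) : Prop :=
  (∀ i : Fin p.edges.length, f (p.edges.get i) = if Even i.1 then a else b) ∨
  (∀ i : Fin p.edges.length, f (p.edges.get i) = if Even i.1 then b else a)

/-- The path `p` is `t`-alternating: of any two consecutive edges, one is colored `t`. -/
def AltPath (f : Sym2 V → ℕ) (t : ℕ) {G : SimpleGraph V} {u x : V}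
    (p : G.Walk u x) : Prop :=
  ∀ (i : ℕ) (h : i + 1 < p.edges.length),
    f (p.edges.get ⟨i, Nat.lt_of_succ_lt h⟩) = t ∨ f (p.edges.get ⟨i + 1, h⟩) = t

/-- The cycle `c` is `t`-alternating: of any two (cyclically) consecutive edges, one is
colored `t`. -/
def IsAltCycle (f : Sym2 V → ℕ) (t : ℕ) {G : SimpleGraph V} {u : V}
    (c : G.Walk u u) : Prop :=
  ∀ i : Fin c.edges.length,
    f (c.edges.get i) = t ∨
    f (c.edges.get ⟨(i.1 + 1) % c.edges.length, Nat.mod_lt _ i.pos⟩) = t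

/-- `G` is 2-connected. -/
def TwoConnected (G : SimpleGraph V) : Prop :=
  G.Connected ∧ 3 ≤ Nat.card V ∧ ∀ x, ¬ IsCutVertex G x

/-- The union of the cycle `c` and the ears `P j` for `j < i`, as a subgraph. -/
noncomputable def earPrefix {G : SimpleGraph V} {v₀ : V} (c : G.Walk v₀ v₀) {n : ℕ}
    {x y : Fin n → V} (P : ∀ i : Fin n, G.Walk (x i) (y i)) (i : ℕ) : G.Subgraph :=
  c.toSubgraph ⊔ ⨆ j : Fin n, ⨆ _ : (j : ℕ) < i, (P j).toSubgraph

/-- `c, P 0, …, P (n-1)` is a `t`-alternating ear decomposition with respect to the cycle `c`: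
`c` is a `t`-alternating cycle, and each `P i` is a `(cᵢ, t)`-colored path (`cᵢ ≤ t - 1`) which
is an ear of `c ∪ P 0 ∪ … ∪ P i`, i.e. its endpoints lie in the previous part and its internal
vertices have degree 2 in `c ∪ P 0 ∪ … ∪ P i`. -/
def IsEarDecomp (G : SimpleGraph V) (f : Sym2 V → ℕ) (t : ℕ) {v₀ : V} (c : G.Walk v₀ v₀)
    (n : ℕ) (x y : Fin n → V) (P : ∀ i : Fin n, G.Walk (x i) (y i)) : Prop :=
  c.IsCycle ∧ IsAltCycle f t c ∧
  ∀ i : Fin n,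
    (P i).IsPath ∧ 1 ≤ (P i).length ∧
    (∃ ci : ℕ, ci ≤ t - 1 ∧ AltColored f ci t (P i)) ∧
    x i ∈ (earPrefix c P (i : ℕ)).verts ∧ y i ∈ (earPrefix c P (i : ℕ)).verts ∧
    ∀ a ∈ (P i).support, a ≠ x i → a ≠ y i →
      ((earPrefix c P ((i : ℕ) + 1)).neighborSet a).ncard = 2

/-- The line graph of `G`. -/
def lineGr (G : SimpleGraph V) : SimpleGraph G.edgeSet :=
  SimpleGraph.fromRel (fun e₁ e₂ => ∃ x, x ∈ (e₁ : Sym2 V) ∧ x ∈ (e₂ : Sym2 V))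

/-- The clique number (in `ℕ∞`). -/
noncomputable def cliqueNumE (G : SimpleGraph V) : ℕ∞ :=
  sSup {n : ℕ∞ | ∃ (m : ℕ) (s : Finset V), n = (m : ℕ∞) ∧ G.IsNClique m s}

/-- `G` is a perfect graph: every induced subgraph has chromatic number equal to its
clique number. -/
def IsPerfect (G : SimpleGraph V) : Prop :=
  ∀ s : Set V, (G.induce s).chromaticNumber = cliqueNumE (G.induce s)

/-- A partition of the vertex set of `G` into `n` cliques, each of size `sz`. -/
def IsCliquePartition (G : SimpleGraph V) (n sz : ℕ) (P : Set (Set V)) : Prop :=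
  P.ncard = n ∧ (∀ s ∈ P, G.IsClique s ∧ s.ncard = sz) ∧
  ⋃₀ P = Set.univ ∧ P.Pairwise fun s₁ s₂ => Disjoint s₁ s₂

/-- A proper vertex `n`-coloring of `G`, viewed as a partition of the vertex set into `n`
independent sets (color classes). -/
def IsIndepPartition (G : SimpleGraph V) (n : ℕ) (P : Set (Set V)) : Prop :=
  P.ncard = n ∧ (∀ s ∈ P, ∀ a ∈ s, ∀ b ∈ s, ¬ G.Adj a b) ∧
  ⋃₀ P = Set.univ ∧ P.Pairwise fun s₁ s₂ => Disjoint s₁ s₂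

/-- The graph `H(p,n)`: vertex classes `V_1, …, V_{2n}` of size `p` (indexed here by
`ZMod (2n)`), with two vertices adjacent iff they lie in the same class or in (cyclically)
consecutive classes. -/
def Hgraph (p n : ℕ) : SimpleGraph (ZMod (2 * n) × Fin p) :=
  SimpleGraph.fromRel (fun a b => a.1 = b.1 ∨ a.1 + 1 = b.1)

/-- The clique partition `{C_1, …, C_n}` of `H(p,n)`, `C_i = V_{2i-1} ∪ V_{2i}`. -/
def Cpart (p n : ℕ) : Set (Set (ZMod (2 * n) × Fin p)) :=
  {s | ∃ i : Fin n, s = {x | x.1 = ((2 * (i : ℕ) : ℕ) : ZMod (2 * n)) ∨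
      x.1 = ((2 * (i : ℕ) + 1 : ℕ) : ZMod (2 * n))}}

/-- The clique partition `{R_1, …, R_n}` of `H(p,n)`, `R_1 = V_{2n} ∪ V_1` and
`R_i = V_{2i-2} ∪ V_{2i-1}`. -/
def Rpart (p n : ℕ) : Set (Set (ZMod (2 * n) × Fin p)) :=
  {s | ∃ i : Fin n, s = {x | x.1 = ((2 * (i : ℕ) : ℕ) : ZMod (2 * n)) - 1 ∨
      x.1 = ((2 * (i : ℕ) : ℕ) : ZMod (2 * n))}}

/-- A multigraph on vertices `α` with edges `β`: each edge has two distinct endpoints. -/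
structure Multigraph (α : Type u) (β : Type v) where
  ends : β → Sym2 α
  not_isDiag : ∀ e, ¬ (ends e).IsDiag

namespace Multigraph

variable {α : Type u} {β : Type v}

/-- A proper `t`-edge-coloring of a multigraph, with colors `1, …, t`. -/
def IsProper (G : Multigraph α β) (t : ℕ) (f : β → ℕ) : Prop :=
  (∀ e, f e ∈ Finset.Icc 1 t) ∧
  ∀ e₁ e₂ : β, e₁ ≠ e₂ → (∃ x, x ∈ G.ends e₁ ∧ x ∈ G.ends e₂) → f e₁ ≠ f e₂

/-- The color class `M(f,j)` of a multigraph edge coloring. -/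
def mColorClass (f : β → ℕ) (j : ℕ) : Set β := {e | f e = j}

/-- `f` and `g` differ by at most `n` color classes. -/
def MDifferAtMost (n : ℕ) (f g : β → ℕ) : Prop :=
  {j : ℕ | mColorClass f j ≠ mColorClass g j}.ncard ≤ n

/-- `n`-equivalence of proper `t`-edge-colorings of a multigraph. -/
def MNEquiv (G : Multigraph α β) (t n : ℕ) (f g : β → ℕ) : Prop :=
  ∃ (k : ℕ) (F : ℕ → β → ℕ), 1 ≤ k ∧ F 0 = f ∧ F k = g ∧
    (∀ i ≤ k, G.IsProper t (F i)) ∧ ∀ i < k, MDifferAtMost n (F i) (F (i + 1))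

/-- The chromatic index of a multigraph. -/
noncomputable def mChromIdx (G : Multigraph α β) : ℕ :=
  sInf {t | ∃ f, G.IsProper t f}

/-- The edge chromatic transformation index of a multigraph. -/
noncomputable def mTransIdx (G : Multigraph α β) : ℕ :=
  sInf {n | 2 ≤ n ∧ ∀ f g, G.IsProper G.mChromIdx f → G.IsProper G.mChromIdx g →
      G.MNEquiv G.mChromIdx n f g}

/-- The degree of a vertex in a multigraph. -/
noncomputable def mDeg (G : Multigraph α β) (x : α) : ℕ := {e | x ∈ G.ends e}.ncard

/-- The underlying simple graph of a multigraph. -/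
def toSimple (G : Multigraph α β) : SimpleGraph α :=
  SimpleGraph.fromEdgeSet (Set.range G.ends)

end Multigraph


/-! ### Recoloring with few colors -/

/-- In a graph of `𝒜(q)`, a set `T` of edges with at most `q` edges at each vertex can be properly
colored with any prescribed set `R` of `q` colors. The degree bound at `v` is supplied as an
injective labelling `κ` of the `T`-edges at `v` with at most `q` labels. -/
theorem exists_recoloring [Fintype V] {q : ℕ} {G : SimpleGraph V} (hA : MemA q G)
    (T : Set (Sym2 V)) (hT : T ⊆ G.edgeSet) (R : Finset ℕ) (hR : R.card = q)
    (hdeg : ∀ v, ∃ (κ : Sym2 V → ℕ) (C : Finset ℕ), C.card ≤ q ∧ (∀ d ∈ T, v ∈ d → κ d ∈ C) ∧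
      ∀ d ∈ T, ∀ d' ∈ T, v ∈ d → v ∈ d' → κ d = κ d' → d = d') :
    ∃ ψ : Sym2 V → ℕ, (∀ d ∈ T, ψ d ∈ R) ∧
      ∀ d ∈ T, ∀ d' ∈ T, d ≠ d' → (∃ v, v ∈ d ∧ v ∈ d') → ψ d ≠ ψ d' := by
  classical
  have hE : (SimpleGraph.fromEdgeSet T).edgeSet = T := by
    rw [SimpleGraph.edgeSet_fromEdgeSet]
    ext d
    refine ⟨fun h => h.1, fun h => ⟨h, fun hd => ?_⟩⟩
    exact G.not_isDiag_of_mem_edgeSet (hT h) hd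
  have hle : SimpleGraph.fromEdgeSet T ≤ G := by
    rw [← SimpleGraph.edgeSet_subset_edgeSet, hE]
    exact hT
  have hΔ : maxDeg (SimpleGraph.fromEdgeSet T) ≤ q := by
    refine ciSup_le' fun v => ?_
    obtain ⟨κ, C, hC, hCκ, hinj⟩ := hdeg v
    refine le_trans ?_ hC
    rw [deg, ← Set.ncard_coe_finset]
    have hmem : ∀ w ∈ (SimpleGraph.fromEdgeSet T).neighborSet v, s(v, w) ∈ T := by
      intro w hw
      rw [SimpleGraph.mem_neighborSet, SimpleGraph.fromEdgeSet_adj] at hw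
      exact hw.1
    refine Set.ncard_le_ncard_of_injOn (fun w => κ s(v, w)) ?_ ?_ (Finset.finite_toSet C)
    · intro w hw
      exact hCκ _ (hmem w hw) (Sym2.mem_mk_left _ _)
    · intro w hw w' hw' h
      have := hinj _ (hmem w hw) _ (hmem w' hw') (Sym2.mem_mk_left _ _) (Sym2.mem_mk_left _ _) h
      exact Sym2.congr_right.1 this
  obtain ⟨h, hh1, hh2⟩ := hA _ hle hΔ
  rw [hE] at hh1 hh2
  have hcard : (Finset.Icc 1 q).card = R.card := by simp [hR]
  let E := Finset.equivOfCardEq hcard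
  refine ⟨fun d => if hd : h d ∈ Finset.Icc 1 q then (E ⟨h d, hd⟩ : ℕ) else 0, ?_, ?_⟩
  · intro d hd
    simp only [hh1 d hd, dif_pos]
    exact (E _).2
  · intro d hd d' hd' hne hv heq
    simp only [hh1 d hd, hh1 d' hd', dif_pos] at heq
    have := E.injective (Subtype.ext heq)
    exact hh2 d hd d' hd' hne hv (by simpa using this)

/-- `φ` and `ψ` agree on `G` up to edges that both of them color with colors from `S`. -/
def AgreeOff (G : SimpleGraph V) (S : Finset ℕ) (φ ψ : Sym2 V → ℕ) : Prop :=
  ∀ d ∈ G.edgeSet, φ d = ψ d ∨ (φ d ∈ S ∧ ψ d ∈ S)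

theorem AgreeOff.symm {G : SimpleGraph V} {S : Finset ℕ} {φ ψ : Sym2 V → ℕ}
    (h : AgreeOff G S φ ψ) : AgreeOff G S ψ φ :=
  fun d hd => (h d hd).imp Eq.symm And.symm

theorem AgreeOff.trans {G : SimpleGraph V} {S : Finset ℕ} {φ ψ χ : Sym2 V → ℕ}
    (h : AgreeOff G S φ ψ) (h' : AgreeOff G S ψ χ) : AgreeOff G S φ χ := by
  intro d hd
  have h1 := h d hd
  have h2 := h' d hd
  grind

theorem AgreeOff.mono {G : SimpleGraph V} {S S' : Finset ℕ} {φ ψ : Sym2 V → ℕ}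
    (h : AgreeOff G S φ ψ) (hS : S ⊆ S') : AgreeOff G S' φ ψ :=
  fun d hd => (h d hd).imp id fun h => ⟨hS h.1, hS h.2⟩

theorem AgreeOff.differAtMost {G : SimpleGraph V} {S : Finset ℕ} {φ ψ : Sym2 V → ℕ}
    (h : AgreeOff G S φ ψ) {n : ℕ} (hn : S.card ≤ n) : DifferAtMost G n φ ψ := by
  refine le_trans ?_ hn
  rw [← Set.ncard_coe_finset]
  refine Set.ncard_le_ncard ?_ (Finset.finite_toSet S)
  intro j hj
  by_contra hjS
  refine hj ?_
  ext d
  simp only [colorClass, Set.mem_ofPred_eq]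
  refine and_congr_right fun hd => ?_
  have := h d hd
  have hjS' : j ∉ S := hjS
  grind

theorem NEquiv.refl {G : SimpleGraph V} {t n : ℕ} {f : Sym2 V → ℕ}
    (hf : IsProperEdgeColoring G t f) : NEquiv G t n f f :=
  ⟨1, fun _ => f, le_rfl, rfl, rfl, fun _ _ => hf, fun _ _ => by simp [DifferAtMost]⟩

theorem NEquiv.step {G : SimpleGraph V} {t n : ℕ} {F f f' : Sym2 V → ℕ}
    (h : NEquiv G t n f f') (hF : IsProperEdgeColoring G t F) (hd : DifferAtMost G n F f) :
    NEquiv G t n F f' := by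
  obtain ⟨k, Φ, -, h0, hk, hp, hs⟩ := h
  refine ⟨k + 1, fun i => Nat.casesOn i F Φ, by omega, rfl, hk, ?_, ?_⟩
  · rintro (_ | i) hi
    · exact hF
    · exact hp i (by omega)
  · rintro (_ | i) hi
    · simpa [h0] using hd
    · exact hs i (by omega)

/-! ### Cycles with few colors -/

/-- If `D` is a set of edges of `M(f,t) △ M(g,t)` whose vertices are all incident with both an
`M(f,t)`-edge and an `M(g,t)`-edge of `D`, and `f` uses at most `q + 1` colors on `D`, then a
single recoloring of `q + 1` classes makes `M(f,t) △ D` the color class `t`. -/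
theorem exists_better_of_few_colors [Fintype V] {q t : ℕ} {G : SimpleGraph V}
    (hA : MemA q G) (htq : q + 2 ≤ t) {f g : Sym2 V → ℕ}
    (hf : IsProperEdgeColoring G t f) (hg : IsProperEdgeColoring G t g)
    (D : Set (Sym2 V)) (hDG : D ⊆ G.edgeSet)
    (hD : ∀ d ∈ D, (f d = t ∧ g d ≠ t) ∨ (f d ≠ t ∧ g d = t))
    (hDf : ∀ d ∈ D, ∀ v ∈ d, ∃ d' ∈ D, v ∈ d' ∧ f d' = t)
    (hDg : ∀ d ∈ D, ∀ v ∈ d, ∃ d' ∈ D, v ∈ d' ∧ g d' = t)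
    (hne : D.Nonempty) (hcol : (f '' D).ncard ≤ q + 1) :
    ∃ fb, IsProperEdgeColoring G t fb ∧ NEquiv G t (q + 1) fb f ∧
      (colorClass G f t ∩ colorClass G g t).ncard <
        (colorClass G fb t ∩ colorClass G g t).ncard := by
  classical
  have ht1 : t ∈ Finset.Icc 1 t := by simp; omega
  obtain ⟨d₀, hd₀⟩ := hne
  obtain ⟨v₀, hv₀⟩ : ∃ v, v ∈ d₀ := ⟨_, d₀.out_fst_mem⟩
  obtain ⟨dt, hdt, hdtv, hdtt⟩ := hDf d₀ hd₀ v₀ hv₀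
  obtain ⟨dg, hdg, hdgv, hdgt⟩ := hDg d₀ hd₀ v₀ hv₀
  obtain ⟨S, hS0, hS1, hScard⟩ : ∃ S : Finset ℕ, (f '' D).toFinite.toFinset ⊆ S ∧
      S ⊆ Finset.Icc 1 t ∧ S.card = q + 1 := by
    refine Finset.exists_subsuperset_card_eq ?_ ?_ ?_
    · intro j hj
      obtain ⟨d, hd, rfl⟩ := (Set.Finite.mem_toFinset _).1 hj
      exact hf.1 d (hDG hd)
    · rwa [← Set.ncard_eq_toFinset_card _ (Set.toFinite _)]
    · simp; omega
  have hSD : ∀ d ∈ D, f d ∈ S := fun d hd =>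
    hS0 ((Set.Finite.mem_toFinset _).2 (Set.mem_image_of_mem f hd))
  have htS : t ∈ S := hdtt ▸ hSD dt hdt
  have hinjf : ∀ v, ∀ d ∈ G.edgeSet, ∀ d' ∈ G.edgeSet, v ∈ d → v ∈ d' → f d = f d' → d = d' := by
    intro v d hd d' hd' hv hv' h
    by_contra hne
    exact hf.2 d hd d' hd' hne ⟨v, hv, hv'⟩ h
  have hinjg : ∀ v, ∀ d ∈ G.edgeSet, ∀ d' ∈ G.edgeSet, v ∈ d → v ∈ d' → g d = g d' → d = d' := by
    intro v d hd d' hd' hv hv' h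
    by_contra hne
    exact hg.2 d hd d' hd' hne ⟨v, hv, hv'⟩ h
  -- the edges with colors in `S` outside the new class `t`
  let T : Set (Sym2 V) := {d | d ∈ G.edgeSet ∧
    ((f d ∈ S ∧ f d ≠ t ∧ d ∉ D) ∨ (f d = t ∧ d ∈ D))}
  have hTG : T ⊆ G.edgeSet := fun d hd => hd.1
  have hRcard : (S.erase t).card = q := by rw [Finset.card_erase_of_mem htS]; omega
  obtain ⟨ψ₀, hψR, hψp⟩ := exists_recoloring hA T hTG (S.erase t) hRcard (by
    intro v
    refine ⟨f, ?_⟩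
    by_cases hv : ∃ d ∈ D, v ∈ d
    · -- a vertex covered by `D`: its `g`-edge in `D` frees one of the `q + 1` colors
      obtain ⟨d, hd, hvd⟩ := hv
      obtain ⟨d', hd', hvd', hgd'⟩ := hDg d hd v hvd
      refine ⟨S.erase (f d'), ?_, ?_, fun d hd d' hd' => hinjf v d hd.1 d' hd'.1⟩
      · rw [Finset.card_erase_of_mem (hSD d' hd')]; omega
      · rintro d₁ ⟨hd₁, h₁⟩ hv₁
        refine Finset.mem_erase.2 ⟨fun h => ?_, ?_⟩
        · have := hinjf v d₁ hd₁ d' (hDG hd') hv₁ hvd' h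
          subst this
          have := hD d₁ hd'
          grind
        · grind
    · refine ⟨S.erase t, hRcard.le, ?_, fun d hd d' hd' => hinjf v d hd.1 d' hd'.1⟩
      rintro d₁ ⟨hd₁, h₁⟩ hv₁
      refine Finset.mem_erase.2 ?_
      grind)
  let ψ : Sym2 V → ℕ := fun d => if d ∈ T then ψ₀ d else if d ∈ D then t else f d
  have hψT : ∀ d ∈ T, ψ d = ψ₀ d := fun d hd => by simp [ψ, hd]
  have hψcase : ∀ d ∈ G.edgeSet, (d ∈ T ∧ ψ d ∈ S ∧ ψ d ≠ t ∧ f d ∈ S) ∨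
      (d ∈ D ∧ g d = t ∧ f d ≠ t ∧ ψ d = t) ∨
      (d ∉ D ∧ ψ d = f d ∧ (f d ∉ S ∨ f d = t)) := by
    intro d hd
    by_cases hdT : d ∈ T
    · left
      have := hψR d hdT
      rw [← hψT d hdT, Finset.mem_erase] at this
      refine ⟨hdT, this.2, this.1, ?_⟩
      obtain ⟨_, h | h⟩ := hdT
      · exact h.1
      · rw [h.1]; exact htS
    · right
      by_cases hdD : d ∈ D
      · left
        have hft : f d ≠ t := fun h => hdT ⟨hd, Or.inr ⟨h, hdD⟩⟩
        exact ⟨hdD, ((hD d hdD).resolve_left fun h => hft h.1).2, hft, by simp [ψ, hdT, hdD]⟩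
      · right
        refine ⟨hdD, by simp [ψ, hdT, hdD], ?_⟩
        by_contra! h
        exact hdT ⟨hd, Or.inl ⟨h.1, h.2, hdD⟩⟩
  have hagree : AgreeOff G S ψ f := by
    intro d hd
    have := hψcase d hd
    have := hSD d
    grind
  have hψ : IsProperEdgeColoring G t ψ := by
    refine ⟨fun d hd => ?_, ?_⟩
    · rcases hagree d hd with h | h
      · rw [h]; exact hf.1 d hd
      · exact hS1 h.1
    · rintro d hd d' hd' hne ⟨v, hv, hv'⟩ heq
      have key : ∀ d₁ ∈ D, ∀ d₂ ∈ G.edgeSet, d₂ ∉ D → v ∈ d₁ → v ∈ d₂ → f d₂ ≠ t := by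
        intro d₁ h₁ d₂ h₂ h₂D hv₁ hv₂ h
        obtain ⟨d₃, h₃, hv₃, hf₃⟩ := hDf d₁ h₁ v hv₁
        have := hinjf v d₂ h₂ d₃ (hDG h₃) hv₂ hv₃ (h.trans hf₃.symm)
        exact h₂D (this ▸ h₃)
      rcases hψcase d hd with h | h | h <;> rcases hψcase d' hd' with h' | h' | h'
      · refine hψp d h.1 d' h'.1 hne ⟨v, hv, hv'⟩ ?_
        rw [← hψT d h.1, ← hψT d' h'.1, heq]
      · grind
      · grind
      · grind
      · exact hne (hinjg v d hd d' hd' hv hv' (h.2.1.trans h'.2.1.symm))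
      · have := key d h.1 d' hd' h'.1 hv hv'
        grind
      · grind
      · have := key d' h'.1 d hd h.1 hv' hv
        grind
      · exact hne (hinjf v d hd d' hd' hv hv' (by rw [← h.2.1, ← h'.2.1, heq]))
  refine ⟨ψ, hψ, (NEquiv.refl hf).step hψ (hagree.differAtMost hScard.le), ?_⟩
  refine Set.ncard_lt_ncard ?_ (Set.toFinite _)
  refine (Set.ssubset_iff_of_subset ?_).2 ⟨dg, ?_, ?_⟩
  · rintro d ⟨⟨hd, hfd⟩, _, hgd⟩
    refine ⟨⟨hd, ?_⟩, hd, hgd⟩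
    have hdD : d ∉ D := fun h => by have := hD d h; grind
    have hdT : d ∉ T := by rintro ⟨_, h⟩; grind
    simp [ψ, hdT, hdD, hfd]
  · have hft : f dg ≠ t := by have := hD dg hdg; grind
    have hdT : dg ∉ T := by rintro ⟨_, h⟩; grind
    exact ⟨⟨hDG hdg, by simp [ψ, hdT, hdg]⟩, hDG hdg, hdgt⟩
  · rintro ⟨⟨_, h⟩, _, h'⟩
    have := hD dg hdg
    grind

/-! ### Cycles with a vertex of small degree -/

/-- An almost proper coloring `φ`: the only conflicts are between the edge `xy`, which has color
`t`, and other edges of color `t` at `x`. Moreover some color `β ≠ t` is missing at `x`, the edge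
`xy` is not in `M(g,t)`, the vertex `y` lies in the given set `U`, and all edges of color `t` come
from `M(f,t) ∪ M(g,t)`. -/
structure Near (G : SimpleGraph V) (t : ℕ) (f g : Sym2 V → ℕ) (U : Set V)
    (φ : Sym2 V → ℕ) (x y : V) (β : ℕ) : Prop where
  adj : G.Adj x y
  color : φ s(x, y) = t
  gcolor : g s(x, y) ≠ t
  range : ∀ d ∈ G.edgeSet, φ d ∈ Finset.Icc 1 t
  proper : ∀ v, ∀ d ∈ G.edgeSet, ∀ d' ∈ G.edgeSet, d ≠ d' → v ∈ d → v ∈ d' → φ d = φ d' →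
    v = x ∧ (d = s(x, y) ∨ d' = s(x, y))
  ne : β ≠ t
  missing : MissingAt G φ β x
  mem : y ∈ U
  sub : ∀ d ∈ G.edgeSet, φ d = t → f d = t ∨ g d = t

/-- An almost proper coloring can be turned into a proper one by recoloring the classes in any
`q`-set `S` of colors containing `t` and the color missing at `x`. -/
theorem Near.exists_completion [Fintype V] {q t : ℕ} {G : SimpleGraph V} (hA : MemA q G)
    {f g : Sym2 V → ℕ} {U : Set V} {φ : Sym2 V → ℕ} {x y : V} {β : ℕ}
    (h : Near G t f g U φ x y β) (S : Finset ℕ) (hS : S ⊆ Finset.Icc 1 t) (hcard : S.card = q)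
    (htS : t ∈ S) (hβS : β ∈ S) :
    ∃ F, IsProperEdgeColoring G t F ∧ AgreeOff G S F φ := by
  classical
  let T : Set (Sym2 V) := {d | d ∈ G.edgeSet ∧ φ d ∈ S}
  obtain ⟨ψ₀, hψS, hψp⟩ := exists_recoloring hA T (fun d hd => hd.1) S hcard (by
    intro v
    by_cases hv : v = x
    · -- at `x` the label `β` of the edge `xy` keeps it apart from the other edge of color `t`
      refine ⟨Function.update φ s(x, y) β, S, hcard.le, ?_, ?_⟩
      · intro d hd _
        by_cases hde : d = s(x, y)
        · simpa [hde] using hβS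
        · simpa [hde] using hd.2
      · intro d hd d' hd' hvd hvd' heq
        have m := h.missing
        by_contra hne
        by_cases hde : d = s(x, y)
        · have hde' : d' ≠ s(x, y) := fun h => hne (hde.trans h.symm)
          rw [hde, Function.update_self, Function.update_of_ne hde'] at heq
          exact m d' hd'.1 (hv ▸ hvd') heq.symm
        · by_cases hde' : d' = s(x, y)
          · rw [hde', Function.update_self, Function.update_of_ne hde] at heq
            exact m d hd.1 (hv ▸ hvd) heq
          · rw [Function.update_of_ne hde, Function.update_of_ne hde'] at heq
            rcases (h.proper v d hd.1 d' hd'.1 hne hvd hvd' heq).2 with h | h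
            exacts [hde h, hde' h]
    · refine ⟨φ, S, hcard.le, fun d hd _ => hd.2, ?_⟩
      intro d hd d' hd' hvd hvd' heq
      by_contra hne
      exact hv (h.proper v d hd.1 d' hd'.1 hne hvd hvd' heq).1)
  have hagree : AgreeOff G S (fun d => if d ∈ T then ψ₀ d else φ d) φ := by
    intro d hd
    by_cases hdT : d ∈ T
    · right
      simpa [hdT] using ⟨hψS d hdT, hdT.2⟩
    · left
      simp [hdT]
  refine ⟨_, ⟨fun d hd => ?_, ?_⟩, hagree⟩
  · rcases hagree d hd with h' | h'
    · beta_reduce at h' ⊢; rw [h']; exact h.range d hd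
    · exact hS h'.1
  · rintro d hd d' hd' hne ⟨v, hv, hv'⟩ heq
    have hmem : ∀ d ∈ G.edgeSet, d ∉ T → φ d ∉ S := fun d hd hdT h => hdT ⟨hd, h⟩
    by_cases hdT : d ∈ T <;> by_cases hdT' : d' ∈ T <;> simp only [hdT, hdT', if_true, if_false] at heq
    · exact hψp d hdT d' hdT' hne ⟨v, hv, hv'⟩ heq
    · exact hmem d' hd' hdT' (heq ▸ hψS d hdT)
    · exact hmem d hd hdT (heq ▸ hψS d' hdT')
    · rcases (h.proper v d hd d' hd' hne hv hv' heq).2 with h' | h'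
      · exact hmem d hd hdT (by rw [h', h.color]; exact htS)
      · exact hmem d' hd' hdT' (by rw [h', h.color]; exact htS)

/-- The `M(g,t)`-edge `yz` at `y` receives color `t`, and the remaining edges with colors in a
`q`-set `R` of colors `≠ t`, together with `xy`, are recolored with `R`. If another edge `zw` of
color `t` ends at `z`, then `zw` takes over the role of `xy`; otherwise the new coloring is
proper. -/
theorem Near.step [Fintype V] {q t : ℕ} {G : SimpleGraph V} (hA : MemA q G)
    (htq : q + 2 ≤ t) {f g : Sym2 V → ℕ} (hg : IsProperEdgeColoring G t g) {U : Set V}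
    (hUg : ∀ v ∈ U, ∃ w ∈ U, G.Adj v w ∧ g s(v, w) = t)
    (hUf : ∀ v ∈ U, ∀ w, G.Adj v w → f s(v, w) = t → w ∈ U)
    {φ : Sym2 V → ℕ} {x y : V} {β : ℕ} (h : Near G t f g U φ x y β)
    (S : Finset ℕ) (hS : S ⊆ Finset.Icc 1 t) (hcard : S.card = q) (htS : t ∈ S) (hβS : β ∈ S) :
    ∃ (ψ : Sym2 V → ℕ) (S' : Finset ℕ), S ⊆ S' ∧ S' ⊆ Finset.Icc 1 t ∧ S'.card = q + 1 ∧
      AgreeOff G S' ψ φ ∧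
      (colorClass G φ t ∩ colorClass G g t).ncard <
        (colorClass G ψ t ∩ colorClass G g t).ncard ∧
      (IsProperEdgeColoring G t ψ ∨ ∃ z w β', Near G t f g U ψ z w β' ∧ β' ∈ S') := by
  classical
  obtain ⟨z, hzU, hyz, hgyz⟩ := hUg y h.mem
  have hxyne : x ≠ y := h.adj.ne
  have heG : s(x, y) ∈ G.edgeSet := h.adj
  have hyzG : s(y, z) ∈ G.edgeSet := hyz
  have hne : s(y, z) ≠ s(x, y) := fun heq => h.gcolor (heq ▸ hgyz)
  have hzx : z ≠ x := by rintro rfl; exact hne Sym2.eq_swap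
  have hzy : z ≠ y := hyz.ne'
  have hze : z ∉ s(x, y) := by simp [hzx, hzy]
  -- away from `x` the coloring `φ` has no conflicts
  have hinj : ∀ v, v ≠ x → ∀ d ∈ G.edgeSet, ∀ d' ∈ G.edgeSet, v ∈ d → v ∈ d' →
      φ d = φ d' → d = d' := by
    intro v hv d hd d' hd' hvd hvd' heq
    by_contra hdd
    exact hv (h.proper v d hd d' hd' hdd hvd hvd' heq).1
  have hinjg : ∀ v, ∀ d ∈ G.edgeSet, ∀ d' ∈ G.edgeSet, v ∈ d → v ∈ d' → g d = g d' → d = d' := by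
    intro v d hd d' hd' hv hv' h
    by_contra hne
    exact hg.2 d hd d' hd' hne ⟨v, hv, hv'⟩ h
  have hφyz : φ s(y, z) ≠ t := fun heq =>
    hne (hinj y hxyne.symm _ hyzG _ heG (by simp) (by simp) (heq.trans h.color.symm))
  obtain ⟨S', hSS', hS', hS'card⟩ : ∃ S' : Finset ℕ, insert (φ s(y, z)) S ⊆ S' ∧
      S' ⊆ Finset.Icc 1 t ∧ S'.card = q + 1 := by
    refine Finset.exists_subsuperset_card_eq ?_ ?_ ?_
    · exact Finset.insert_subset (h.range _ hyzG) hS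
    · exact (Finset.card_insert_le _ _).trans (by omega)
    · simp; omega
  have hγS' : φ s(y, z) ∈ S' := hSS' (Finset.mem_insert_self _ _)
  have hSS'' : S ⊆ S' := fun j hj => hSS' (Finset.mem_insert_of_mem hj)
  have htS' : t ∈ S' := hSS'' htS
  have hβS' : β ∈ S' := hSS'' hβS
  have hRcard : (S'.erase t).card = q := by rw [Finset.card_erase_of_mem htS']; omega
  let T : Set (Sym2 V) := {d | d ∈ G.edgeSet ∧ d ≠ s(y, z) ∧
    ((φ d ∈ S' ∧ φ d ≠ t) ∨ d = s(x, y))}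
  have heT : s(x, y) ∈ T := ⟨heG, hne.symm, Or.inr rfl⟩
  have hTS' : ∀ d ∈ T, φ d ∈ S' := by
    rintro d ⟨_, _, h' | h'⟩
    · exact h'.1
    · rw [h', h.color]; exact htS'
  have hTinj : ∀ v, ∀ d ∈ T, ∀ d' ∈ T, v ∈ d → v ∈ d' → φ d = φ d' → d = d' := by
    intro v d hd d' hd' hv hv' heq
    by_contra hdd
    have h1 := (h.proper v d hd.1 d' hd'.1 hdd hv hv' heq).2
    have h2 := h.color
    have h3 := hd.2.2
    have h4 := hd'.2.2
    grind
  obtain ⟨ψ₀, hψR, hψp⟩ := exists_recoloring hA T (fun d hd => hd.1) (S'.erase t) hRcard (by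
    intro v
    refine ⟨φ, ?_⟩
    by_cases hvx : v = x
    · -- `β` is missing at `x`
      refine ⟨S'.erase β, by rw [Finset.card_erase_of_mem hβS']; omega, ?_, hTinj v⟩
      intro d hd hv
      exact Finset.mem_erase.2 ⟨h.missing d hd.1 (hvx ▸ hv), hTS' d hd⟩
    by_cases hvy : v = y
    · -- the edge `yz` is the only one of its color at `y`, and it is not in `T`
      refine ⟨S'.erase (φ s(y, z)), by rw [Finset.card_erase_of_mem hγS']; omega, ?_, hTinj v⟩
      intro d hd hv
      refine Finset.mem_erase.2 ⟨fun heq => hd.2.1 ?_, hTS' d hd⟩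
      exact hinj v hvx _ hd.1 _ hyzG hv (by simp [hvy]) heq
    · refine ⟨S'.erase t, hRcard.le, ?_, hTinj v⟩
      rintro d ⟨hd, _, h' | h'⟩ hv
      · exact Finset.mem_erase.2 ⟨h'.2, h'.1⟩
      · rw [h'] at hv
        simp [hvx, hvy] at hv)
  let ψ : Sym2 V → ℕ := fun d => if d ∈ T then ψ₀ d else if d = s(y, z) then t else φ d
  have hψT : ∀ d ∈ T, ψ d = ψ₀ d := fun d hd => by simp [ψ, hd]
  have hyzT : s(y, z) ∉ T := fun h => h.2.1 rfl
  have hψyz : ψ s(y, z) = t := by simp [ψ, hyzT]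
  have hψcase : ∀ d ∈ G.edgeSet, (d ∈ T ∧ ψ d ∈ S' ∧ ψ d ≠ t) ∨ d = s(y, z) ∨
      (d ≠ s(y, z) ∧ d ≠ s(x, y) ∧ ψ d = φ d ∧ (φ d ∉ S' ∨ φ d = t)) := by
    intro d hd
    by_cases hdT : d ∈ T
    · left
      have := hψR d hdT
      rw [← hψT d hdT, Finset.mem_erase] at this
      exact ⟨hdT, this.2, this.1⟩
    · right
      by_cases hde : d = s(y, z)
      · exact Or.inl hde
      · right
        refine ⟨hde, fun h' => hdT (h' ▸ heT), by simp [ψ, hdT, hde], ?_⟩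
        by_contra! h'
        exact hdT ⟨hd, hde, Or.inl h'⟩
  have hagree : AgreeOff G S' ψ φ := by
    intro d hd
    have h1 := hψcase d hd
    have h2 := hTS' d
    grind
  have hrange : ∀ d ∈ G.edgeSet, ψ d ∈ Finset.Icc 1 t := by
    intro d hd
    rcases hagree d hd with h' | h'
    · rw [h']; exact h.range d hd
    · exact hS' h'.1
  -- the only conflict of `ψ` is between `yz` and an edge of color `t` at `z`
  have hyzconf : ∀ v, ∀ d ∈ G.edgeSet, d ≠ s(y, z) → v ∈ d → v ∈ s(y, z) → ψ d = t →
      v = z ∧ φ d = t := by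
    intro v d hd hdne hv hv' heq
    have h1 := hψcase d hd
    have hφd : φ d = t ∧ d ≠ s(x, y) := by grind
    refine ⟨?_, hφd.1⟩
    rcases Sym2.mem_iff.1 hv' with rfl | rfl
    · exact absurd (hinj v hxyne.symm d hd _ heG hv (by simp) (hφd.1.trans h.color.symm)) hφd.2
    · rfl
  have hconf : ∀ v, ∀ d ∈ G.edgeSet, ∀ d' ∈ G.edgeSet, d ≠ d' → v ∈ d → v ∈ d' → ψ d = ψ d' →
      v = z ∧ ((φ d' = t ∧ ψ d' = t ∧ d = s(y, z)) ∨ (φ d = t ∧ ψ d = t ∧ d' = s(y, z))) := by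
    intro v d hd d' hd' hdd hv hv' heq
    by_cases h1 : d = s(y, z)
    · have h2 : ψ d' = t := by rw [← heq, h1, hψyz]
      have := hyzconf v d' hd' (fun h => hdd (h1.trans h.symm)) hv' (h1 ▸ hv) h2
      exact ⟨this.1, Or.inl ⟨this.2, h2, h1⟩⟩
    by_cases h1' : d' = s(y, z)
    · have h2 : ψ d = t := by rw [heq, h1', hψyz]
      have := hyzconf v d hd h1 hv (h1' ▸ hv') h2
      exact ⟨this.1, Or.inr ⟨this.2, h2, h1'⟩⟩
    exfalso
    rcases hψcase d hd with h2 | h2 | h2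
    · rcases hψcase d' hd' with h3 | h3 | h3
      · refine hψp d h2.1 d' h3.1 hdd ⟨v, hv, hv'⟩ ?_
        rw [← hψT d h2.1, ← hψT d' h3.1, heq]
      · exact h1' h3
      · grind
    · exact h1 h2
    · rcases hψcase d' hd' with h3 | h3 | h3
      · grind
      · exact h1' h3
      · rcases (h.proper v d hd d' hd' hdd hv hv' (by rw [← h2.2.2.1, ← h3.2.2.1, heq])).2 with h4 | h4
        exacts [h2.2.1 h4, h3.2.1 h4]
  have hφψ : ∀ d ∈ G.edgeSet, d ≠ s(x, y) → φ d = t → ψ d = t := by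
    intro d hd hde hdt
    have hdT : d ∉ T := by rintro ⟨_, _, h' | h'⟩ <;> grind
    by_cases h' : d = s(y, z)
    · rw [h', hψyz]
    · simp [ψ, hdT, h', hdt]
  refine ⟨ψ, S', hSS'', hS', hS'card, hagree, ?_, ?_⟩
  · refine Set.ncard_lt_ncard ?_ (Set.toFinite _)
    refine (Set.ssubset_iff_of_subset ?_).2 ⟨s(y, z), ?_, ?_⟩
    · rintro d ⟨⟨hd, hφd⟩, _, hgd⟩
      refine ⟨⟨hd, hφψ d hd ?_ hφd⟩, hd, hgd⟩
      rintro rfl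
      exact h.gcolor hgd
    · exact ⟨⟨hyzG, hψyz⟩, hyzG, hgyz⟩
    · rintro ⟨⟨_, h'⟩, _⟩
      exact hφyz h'
  by_cases hz : ∃ w, G.Adj z w ∧ φ s(z, w) = t
  · right
    obtain ⟨w, hzw, hφzw⟩ := hz
    have hzwG : s(z, w) ∈ G.edgeSet := hzw
    have hzwe : s(z, w) ≠ s(x, y) := fun h' => hze (h' ▸ Sym2.mem_mk_left z w)
    have hzwyz : s(z, w) ≠ s(y, z) := fun h' => hφyz (h' ▸ hφzw)
    have hgzw : g s(z, w) ≠ t := fun h' =>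
      hzwyz (hinjg z _ hzwG _ hyzG (by simp) (by simp) (h'.trans hgyz.symm))
    have hfzw : f s(z, w) = t := (h.sub _ hzwG hφzw).resolve_right hgzw
    -- fewer than `q` edges of `T` end at `z`, so one of the `q` colors used on `T` is missing
    obtain ⟨β', hβ'R, hβ'⟩ : ∃ β' ∈ S'.erase t, ∀ d ∈ T, z ∈ d → ψ₀ d ≠ β' := by
      by_contra! hcon
      have hA1 : ((S'.erase t : Finset ℕ) : Set ℕ).ncard ≤ (ψ₀ '' {d | d ∈ T ∧ z ∈ d}).ncard := by
        refine Set.ncard_le_ncard ?_ (Set.toFinite _)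
        intro j hj
        obtain ⟨d, hd, hzd, hj'⟩ := hcon j hj
        exact ⟨d, ⟨hd, hzd⟩, hj'⟩
      have hA2 : (ψ₀ '' {d | d ∈ T ∧ z ∈ d}).ncard ≤ {d | d ∈ T ∧ z ∈ d}.ncard :=
        Set.ncard_image_le (Set.toFinite _)
      have hA3 : {d | d ∈ T ∧ z ∈ d}.ncard ≤
          (((S'.erase t).erase (φ s(y, z)) : Finset ℕ) : Set ℕ).ncard := by
        refine Set.ncard_le_ncard_of_injOn φ ?_ ?_ (Finset.finite_toSet _)
        · rintro d ⟨hd, hzd⟩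
          refine Finset.mem_erase.2 ⟨fun heq => hd.2.1 ?_, Finset.mem_erase.2 ⟨?_, hTS' d hd⟩⟩
          · exact hinj z hzx _ hd.1 _ hyzG hzd (by simp) heq
          · rcases hd.2.2 with h' | h'
            · exact h'.2
            · exact absurd (h' ▸ hzd) hze
        · rintro d ⟨hd, hzd⟩ d' ⟨hd', hzd'⟩ heq
          exact hTinj z d hd d' hd' hzd hzd' heq
      have hA4 := Finset.card_erase_lt_of_mem (Finset.mem_erase.2 ⟨hφyz, hγS'⟩)
      rw [Set.ncard_coe_finset] at hA1 hA3
      omega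
    rw [Finset.mem_erase] at hβ'R
    refine ⟨z, w, β', ⟨hzw, hφψ _ hzwG hzwe hφzw, hgzw, hrange, ?_, hβ'R.1, ?_, ?_, ?_⟩, hβ'R.2⟩
    · intro v d hd d' hd' hdd hv hv' heq
      obtain ⟨rfl, h' | h'⟩ := hconf v d hd d' hd' hdd hv hv' heq
      · exact ⟨rfl, Or.inr (hinj v hzx _ hd' _ hzwG hv' (by simp) (h'.1.trans hφzw.symm))⟩
      · exact ⟨rfl, Or.inl (hinj v hzx _ hd _ hzwG hv (by simp) (h'.1.trans hφzw.symm))⟩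
    · intro d hd hzd heq
      rcases hψcase d hd with h' | h' | h'
      · exact hβ' d h'.1 hzd (by rw [← hψT d h'.1, heq])
      · rw [h', hψyz] at heq
        exact hβ'R.1 heq.symm
      · grind
    · exact hUf z hzU w hzw hfzw
    · intro d hd hdt
      rcases hψcase d hd with h' | h' | h'
      · exact absurd hdt h'.2.2
      · rw [h']; exact Or.inr hgyz
      · exact h.sub d hd (h'.2.2.1 ▸ hdt)
  · left
    refine ⟨hrange, ?_⟩
    rintro d hd d' hd' hdd ⟨v, hv, hv'⟩ heq
    have key : ∀ d ∈ G.edgeSet, z ∈ d → φ d ≠ t := by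
      intro d hd hzd hdt
      obtain ⟨w, rfl⟩ := hzd
      exact hz ⟨w, hd, hdt⟩
    obtain ⟨rfl, h' | h'⟩ := hconf v d hd d' hd' hdd hv hv' heq
    · exact key d' hd' hv' h'.1
    · exact key d hd hv h'.1

/-- Iterating `Near.step`: the agreement with `M(g,t)` strictly increases, so the process reaches a
proper coloring. The completions `F` of the successive almost proper colorings form the required
sequence of proper colorings. -/
theorem Near.exists_better [Fintype V] {q t : ℕ} (hq : 3 ≤ q) {G : SimpleGraph V}
    (hA : MemA q G) (htq : q + 2 ≤ t) {f g : Sym2 V → ℕ} (hg : IsProperEdgeColoring G t g)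
    {U : Set V} (hUg : ∀ v ∈ U, ∃ w ∈ U, G.Adj v w ∧ g s(v, w) = t)
    (hUf : ∀ v ∈ U, ∀ w, G.Adj v w → f s(v, w) = t → w ∈ U) (n : ℕ) :
    ∀ (φ : Sym2 V → ℕ) (x y : V) (β : ℕ) (S : Finset ℕ) (F : Sym2 V → ℕ),
      Near G t f g U φ x y β → S ⊆ Finset.Icc 1 t → S.card = q → t ∈ S → β ∈ S →
      AgreeOff G S F φ → NEquiv G t (q + 1) F f →
      (colorClass G f t ∩ colorClass G g t).ncard ≤
        (colorClass G φ t ∩ colorClass G g t).ncard →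
      (colorClass G g t).ncard < (colorClass G φ t ∩ colorClass G g t).ncard + n →
      ∃ fb, IsProperEdgeColoring G t fb ∧ NEquiv G t (q + 1) fb f ∧
        (colorClass G f t ∩ colorClass G g t).ncard <
          (colorClass G fb t ∩ colorClass G g t).ncard := by
  induction n with
  | zero =>
    intro φ x y β S F _ _ _ _ _ _ _ _ hlt
    have := Set.ncard_le_ncard (Set.inter_subset_right (s := colorClass G φ t)
      (t := colorClass G g t)) (Set.toFinite _)
    omega
  | succ n ih =>
    intro φ x y β S F h hS hcard htS hβS hF hFf hle hlt
    obtain ⟨ψ, S', hSS', hS', hS'card, hagree, hinc, hψ | ⟨z, w, β', hψ, hβ'⟩⟩ :=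
      h.step hA htq hg hUg hUf S hS hcard htS hβS
    · refine ⟨ψ, hψ, hFf.step hψ ?_, hle.trans_lt hinc⟩
      exact (hagree.trans (hF.mono hSS').symm).differAtMost hS'card.le
    · have htS' : t ∈ S' := hSS' htS
      obtain ⟨S'', h1, h2, h3⟩ : ∃ S'' : Finset ℕ, {t, β'} ⊆ S'' ∧ S'' ⊆ S' ∧ S''.card = q := by
        refine Finset.exists_subsuperset_card_eq ?_ ?_ (by omega)
        · intro j hj
          simp only [Finset.mem_insert, Finset.mem_singleton] at hj
          rcases hj with rfl | rfl
          exacts [htS', hβ']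
        · exact Finset.card_le_two.trans (by omega)
      have htS'' : t ∈ S'' := h1 (by simp)
      have hβS'' : β' ∈ S'' := h1 (by simp)
      obtain ⟨F', hF', hF'ψ⟩ := hψ.exists_completion hA S'' (h2.trans hS') h3 htS'' hβS''
      refine ih ψ z w β' S'' F' hψ (h2.trans hS') h3 htS'' hβS'' hF'ψ (hFf.step hF' ?_)
        (hle.trans hinc.le) (by omega)
      exact (((hF'ψ.mono h2).trans hagree).trans (hF.mono hSS').symm).differAtMost hS'card.le

/-- A vertex of degree less than `t` misses one of the colors `1, …, t`. -/
theorem exists_missing [Fintype V] {t : ℕ} {G : SimpleGraph V} (f : Sym2 V → ℕ) {a : V}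
    (ha : deg G a < t) : ∃ β ∈ Finset.Icc 1 t, MissingAt G f β a := by
  classical
  by_contra! hcon
  have h1 : ((Finset.Icc 1 t : Finset ℕ) : Set ℕ).ncard ≤
      ((fun w => f s(a, w)) '' G.neighborSet a).ncard := by
    refine Set.ncard_le_ncard ?_ (Set.toFinite _)
    intro j hj
    have := hcon j hj
    simp only [MissingAt, not_forall, not_not] at this
    obtain ⟨d, hd, ⟨w, rfl⟩, hj'⟩ := this
    exact ⟨w, hd, hj'⟩
  have h2 : ((fun w => f s(a, w)) '' G.neighborSet a).ncard ≤ (G.neighborSet a).ncard :=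
    Set.ncard_image_le (Set.toFinite _)
  rw [Set.ncard_coe_finset, Nat.card_Icc] at h1
  unfold deg at ha
  omega

/-! ### Cycles of the difference graph -/

/-- Each vertex of a cycle of `G(f,g,t)` is incident with one `M(f,t)`-edge and one `M(g,t)`-edge of
the cycle. -/
theorem exists_edges_of_isCycle {t : ℕ} {G : SimpleGraph V} {f g : Sym2 V → ℕ}
    (hf : IsProperEdgeColoring G t f) (hg : IsProperEdgeColoring G t g)
    {u : V} {c : (diffGraph G t f g).Walk u u} (hc : c.IsCycle)
    (hD : ∀ d ∈ c.edges, d ∈ G.edgeSet ∧ ((f d = t ∧ g d ≠ t) ∨ (f d ≠ t ∧ g d = t)))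
    {v : V} (hv : v ∈ c.support) :
    (∃ w, s(v, w) ∈ c.edges ∧ f s(v, w) = t) ∧ ∃ w, s(v, w) ∈ c.edges ∧ g s(v, w) = t := by
  have h2 := hc.ncard_neighborSet_toSubgraph_eq_two hv
  obtain ⟨w₁, w₂, hne, hw⟩ := Set.ncard_eq_two.1 h2
  have hmem : ∀ w, w ∈ ({w₁, w₂} : Set V) → s(v, w) ∈ c.edges := by
    intro w hw'
    rw [← hw] at hw'
    rw [← SimpleGraph.Walk.mem_edges_toSubgraph]
    exact hw'
  have h₁ := hmem w₁ (by simp)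
  have h₂ := hmem w₂ (by simp)
  have hne' : s(v, w₁) ≠ s(v, w₂) := fun h => hne (Sym2.congr_right.1 h)
  have hf' := hf.2 _ (hD _ h₁).1 _ (hD _ h₂).1 hne' ⟨v, by simp, by simp⟩
  have hg' := hg.2 _ (hD _ h₁).1 _ (hD _ h₂).1 hne' ⟨v, by simp, by simp⟩
  rcases (hD _ h₁).2 with h | h <;> rcases (hD _ h₂).2 with h' | h'
  · exact absurd (h.1.trans h'.1.symm) hf'
  · exact ⟨⟨w₁, h₁, h.1⟩, w₂, h₂, h'.2⟩
  · exact ⟨⟨w₂, h₂, h'.1⟩, w₁, h₁, h.2⟩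
  · exact absurd (h.2.trans h'.2.symm) hg'

/-- Lemma about a `t`-alternating cycle of `G(f,g,t)` that is colored with at
most `q+1` colors or has a vertex of degree less than `t`. -/
theorem exists_better_coloring_of_alternating_cycle
    {V : Type*} [Fintype V] (q t : ℕ) (hq : 3 ≤ q) (G : SimpleGraph V)
    (hA : MemA q G) (ht : maxDeg G = t) (htq : q + 2 ≤ t)
    (f g : Sym2 V → ℕ)
    (hf : IsProperEdgeColoring G t f) (hg : IsProperEdgeColoring G t g)
    (u : V) (c : (diffGraph G t f g).Walk u u) (hc : c.IsCycle)
    (halt : IsAltCycle f t c)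
    (hcase : (f '' {e | e ∈ c.edges}).ncard ≤ q + 1 ∨ ∃ a ∈ c.support, deg G a < t) :
    ∃ fb, IsProperEdgeColoring G t fb ∧ NEquiv G t (q + 1) fb f ∧
      (colorClass G f t ∩ colorClass G g t).ncard <
        (colorClass G fb t ∩ colorClass G g t).ncard := by
  classical
  have hD : ∀ d ∈ c.edges, d ∈ G.edgeSet ∧ ((f d = t ∧ g d ≠ t) ∨ (f d ≠ t ∧ g d = t)) := by
    intro d hd
    have := c.edges_subset_edgeSet hd
    rw [diffGraph, SimpleGraph.edgeSet_fromEdgeSet] at this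
    have := this.1
    simp only [colorClass, Set.mem_symmDiff, Set.mem_ofPred_eq] at this
    tauto
  have hends : ∀ v ∈ c.support, _ := fun v hv => exists_edges_of_isCycle hf hg hc hD hv
  rcases hcase with hcol | ⟨a, ha, hdeg⟩
  · refine exists_better_of_few_colors hA htq hf hg {e | e ∈ c.edges} (fun d hd => (hD d hd).1)
      (fun d hd => (hD d hd).2) ?_ ?_ ?_ hcol
    · intro d hd v hv
      obtain ⟨w, hw, h⟩ := (hends v (c.mem_support_of_mem_edges hd hv)).1
      exact ⟨_, hw, by simp, h⟩
    · intro d hd v hv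
      obtain ⟨w, hw, h⟩ := (hends v (c.mem_support_of_mem_edges hd hv)).2
      exact ⟨_, hw, by simp, h⟩
    · obtain ⟨w, hw, -⟩ := (hends u c.start_mem_support).1
      exact ⟨_, hw⟩
  · obtain ⟨y, hy, hfy⟩ := (hends a ha).1
    obtain ⟨β, hβ, hmiss⟩ := exists_missing f hdeg
    have hβt : t ≠ β := fun h => hmiss _ (hD _ hy).1 (Sym2.mem_mk_left a y) (hfy.trans h)
    have hnear : Near G t f g {v | v ∈ c.support} f a y β := by
      refine ⟨(hD _ hy).1, hfy, ?_, hf.1, ?_, hβt.symm, hmiss, c.snd_mem_support_of_mem_edges hy,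
        fun d _ h => Or.inl h⟩
      · have := (hD _ hy).2
        tauto
      · intro v d hd d' hd' hdd hv hv' heq
        exact absurd heq (hf.2 d hd d' hd' hdd ⟨v, hv, hv'⟩)
    obtain ⟨S, h1, h2, h3⟩ : ∃ S : Finset ℕ, {t, β} ⊆ S ∧ S ⊆ Finset.Icc 1 t ∧ S.card = q := by
      refine Finset.exists_subsuperset_card_eq ?_ ?_ ?_
      · intro j hj
        simp only [Finset.mem_insert, Finset.mem_singleton] at hj
        rcases hj with rfl | rfl
        · simp; omega
        · exact hβ
      · exact Finset.card_le_two.trans (by omega)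
      · simp; omega
    refine Near.exists_better hq hA htq hg ?_ ?_ ((colorClass G g t).ncard + 1) f a y β S f hnear
      h2 h3 (h1 (by simp)) (h1 (by simp)) (fun _ _ => Or.inl rfl) (NEquiv.refl hf) le_rfl (by omega)
    · intro v hv
      obtain ⟨w, hw, h⟩ := (hends v hv).2
      exact ⟨w, c.snd_mem_support_of_mem_edges hw, (hD _ hw).1, h⟩
    · intro v hv w hvw hfw
      obtain ⟨w', hw', h⟩ := (hends v hv).1
      have : s(v, w) = s(v, w') := by
        by_contra hne
        exact hf.2 _ hvw _ (hD _ hw').1 hne ⟨v, by simp, by simp⟩ (hfw.trans h.symm)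
      rw [← this] at hw'
      exact c.snd_mem_support_of_mem_edges hw'

end EdgeTrans
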